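/- Let w and z be independent random elements with values in measurable spaces E and F respectively, and let P : E × F → ℝ be measurable with E[P(w,z)²] < ∞. For integers M, S ≥ 1, let w^1,…,w^M be i.i.d. copies of w and let (z^{m,i})_{1 ≤ m ≤ M, 1 ≤ i ≤ S} be i.i.d. copies of z, with the whole family (w^m) ∪ (z^{m,i}) independent. Define Y_{M,S} = M^{−1} Σ_{m=1}^{M} ( S^{−1} Σ_{i=1}^{S} P(w^m, z^{m,i}) ). Then Y_{M,S} is an unbiased estimator of E[P(w,z)], i.e. E[Y_{M,S}] = E[P(w,z)], and its variance is Var[Y_{M,S}] = M^{−1}·Var_w[ E_z[P(w,z) | w] ] + (MS)^{−1}·E_w[ Var_z[P(w,z) | w] ]. -/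

import Mathlib

open MeasureTheory ProbabilityTheory

lemma mp_eval_pair {ι F : Type*} [Fintype ι] [MeasurableSpace F] (ν : Measure F)
    [IsProbabilityMeasure ν] {a b : ι} (hab : a ≠ b) :
    MeasurePreserving (fun f : ι → F => (f a, f b)) (Measure.pi fun _ : ι => ν) (ν.prod ν) := by
  have h := iIndepFun_pi (μ := fun _ : ι => ν) (X := fun _ => (id : F → F))
    (fun _ => aemeasurable_id)
  have h2 : IndepFun (fun f : ι → F => f a) (fun f : ι → F => f b) (Measure.pi fun _ : ι => ν) :=
    h.indepFun hab
  rw [indepFun_iff_map_prod_eq_prod_map_map (measurable_pi_apply a).aemeasurable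
    (measurable_pi_apply b).aemeasurable] at h2
  refine ⟨by fun_prop, ?_⟩
  have e1 := (measurePreserving_eval (fun _ : ι => ν) a).map_eq
  have e2 := (measurePreserving_eval (fun _ : ι => ν) b).map_eq
  rw [h2]
  exact congrArg₂ Measure.prod e1 e2

lemma mp_integral {α β : Type*} [MeasurableSpace α] [MeasurableSpace β] {μ : Measure α}
    {ν : Measure β} {f : α → β} (hf : MeasurePreserving f μ ν) {g : β → ℝ} (hg : Measurable g) :
    ∫ x, g (f x) ∂μ = ∫ y, g y ∂ν := by
  rw [← hf.map_eq, integral_map hf.measurable.aemeasurable hg.aestronglyMeasurable]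

lemma same_integrable {E F : Type*} [MeasurableSpace E] [MeasurableSpace F]
    (νw : Measure E) (νz : Measure F)
    [IsProbabilityMeasure νw] [IsProbabilityMeasure νz]
    (P : E → F → ℝ) (hPmeas : Measurable fun p : E × F => P p.1 p.2)
    (hP2 : MemLp (fun p : E × F => P p.1 p.2) 2 (νw.prod νz)) :
    Integrable (fun p : E × (F × F) => P p.1 p.2.1 * P p.1 p.2.2) (νw.prod (νz.prod νz)) := by
  have h1 : MeasurePreserving (Prod.map id Prod.fst : E × (F × F) → E × F)
    (νw.prod (νz.prod νz)) (νw.prod νz) := (MeasurePreserving.id νw).prod measurePreserving_fst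
  have h2 : MeasurePreserving (Prod.map id Prod.snd : E × (F × F) → E × F)
    (νw.prod (νz.prod νz)) (νw.prod νz) := (MeasurePreserving.id νw).prod measurePreserving_snd
  exact (hP2.comp_measurePreserving h1).integrable_mul (hP2.comp_measurePreserving h2)

lemma same_integral {E F : Type*} [MeasurableSpace E] [MeasurableSpace F]
    (νw : Measure E) (νz : Measure F)
    [IsProbabilityMeasure νw] [IsProbabilityMeasure νz]
    (P : E → F → ℝ) (hPmeas : Measurable fun p : E × F => P p.1 p.2)
    (hP2 : MemLp (fun p : E × F => P p.1 p.2) 2 (νw.prod νz)) :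
    ∫ p : E × (F × F), P p.1 p.2.1 * P p.1 p.2.2 ∂(νw.prod (νz.prod νz))
      = ∫ w, (∫ z, P w z ∂νz) ^ 2 ∂νw := by
  rw [integral_prod _ (same_integrable νw νz P hPmeas hP2)]
  refine integral_congr_ae (ae_of_all _ fun w => ?_)
  simp only
  rw [integral_prod_mul (fun z => P w z) (fun z => P w z), sq]

lemma g_memLp {E F : Type*} [MeasurableSpace E] [MeasurableSpace F]
    (νw : Measure E) (νz : Measure F)
    [IsProbabilityMeasure νw] [IsProbabilityMeasure νz]
    (P : E → F → ℝ) (hPmeas : Measurable fun p : E × F => P p.1 p.2)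
    (hP2 : MemLp (fun p : E × F => P p.1 p.2) 2 (νw.prod νz)) : MemLp (fun w => ∫ z, P w z ∂νz) 2 νw := by
  have hm : AEStronglyMeasurable (fun w => ∫ z, P w z ∂νz) νw :=
    (hPmeas.stronglyMeasurable.integral_prod_right (f := P)).aestronglyMeasurable
  rw [memLp_two_iff_integrable_sq hm]
  have h := (same_integrable νw νz P hPmeas hP2).integral_prod_left
  refine h.congr (ae_of_all _ fun w => ?_)
  simp only
  rw [integral_prod_mul (fun z => P w z) (fun z => P w z), sq]

lemma diff_integral {E F : Type*} [MeasurableSpace E] [MeasurableSpace F]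
    (νw : Measure E) (νz : Measure F)
    [IsProbabilityMeasure νw] [IsProbabilityMeasure νz]
    (P : E → F → ℝ) (hPmeas : Measurable fun p : E × F => P p.1 p.2)
    (hP2 : MemLp (fun p : E × F => P p.1 p.2) 2 (νw.prod νz)) :
    ∫ p : (E × E) × (F × F), P p.1.1 p.2.1 * P p.1.2 p.2.2 ∂((νw.prod νw).prod (νz.prod νz))
      = (∫ w, (∫ z, P w z ∂νz) ∂νw) ^ 2 := by
  have h1 : MeasurePreserving (Prod.map Prod.fst Prod.fst : (E × E) × (F × F) → E × F)
    ((νw.prod νw).prod (νz.prod νz)) (νw.prod νz) :=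
      measurePreserving_fst.prod measurePreserving_fst
  have h2 : MeasurePreserving (Prod.map Prod.snd Prod.snd : (E × E) × (F × F) → E × F)
    ((νw.prod νw).prod (νz.prod νz)) (νw.prod νz) :=
      measurePreserving_snd.prod measurePreserving_snd
  have hi : Integrable (fun p : (E × E) × (F × F) => P p.1.1 p.2.1 * P p.1.2 p.2.2)
      ((νw.prod νw).prod (νz.prod νz)) :=
    (hP2.comp_measurePreserving h1).integrable_mul (hP2.comp_measurePreserving h2)
  rw [integral_prod _ hi, sq, ← integral_prod_mul]
  refine integral_congr_ae (ae_of_all _ fun w => ?_)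
  simp only
  exact integral_prod_mul (fun z => P w.1 z) (fun z => P w.2 z)

lemma cov_term {E F : Type*} [MeasurableSpace E] [MeasurableSpace F]
    (νw : Measure E) (νz : Measure F)
    [IsProbabilityMeasure νw] [IsProbabilityMeasure νz]
    (P : E → F → ℝ) (hPmeas : Measurable fun p : E × F => P p.1 p.2)
    (hP2 : MemLp (fun p : E × F => P p.1 p.2) 2 (νw.prod νz)) (M S : ℕ) (m m' : Fin M) (i j : Fin S) :
    covariance (fun ω : (Fin M → E) × (Fin M × Fin S → F) => P (ω.1 m) (ω.2 (m, i)))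
      (fun ω => P (ω.1 m') (ω.2 (m', j)))
      ((Measure.pi fun _ : Fin M => νw).prod (Measure.pi fun _ : Fin M × Fin S => νz))
    = if m = m' then variance (fun w => ∫ z, P w z ∂νz) νw + (if i = j then
        ∫ w, ((∫ z, P w z ^ 2 ∂νz) - (∫ z, P w z ∂νz) ^ 2) ∂νw else 0) else 0 := by
  have hmp : ∀ (m : Fin M) (i : Fin S), MeasurePreserving
      (Prod.map (Function.eval m) (Function.eval (m, i)) :
        (Fin M → E) × (Fin M × Fin S → F) → E × F)
      ((Measure.pi fun _ : Fin M => νw).prod (Measure.pi fun _ : Fin M × Fin S => νz))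
      (νw.prod νz) := fun m i =>
    (measurePreserving_eval (fun _ : Fin M => νw) m).prod
      (measurePreserving_eval (fun _ : Fin M × Fin S => νz) (m, i))
  have hL : ∀ (m : Fin M) (i : Fin S), MemLp
      (fun ω : (Fin M → E) × (Fin M × Fin S → F) => P (ω.1 m) (ω.2 (m, i))) 2
      ((Measure.pi fun _ : Fin M => νw).prod (Measure.pi fun _ : Fin M × Fin S => νz)) :=
    fun m i => hP2.comp_measurePreserving (hmp m i)
  have hi1 : Integrable (fun p : E × F => P p.1 p.2) (νw.prod νz) := hP2.integrable (by norm_num)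
  have hE : ∀ (m : Fin M) (i : Fin S),
      ∫ ω : (Fin M → E) × (Fin M × Fin S → F), P (ω.1 m) (ω.2 (m, i))
      ∂((Measure.pi fun _ : Fin M => νw).prod (Measure.pi fun _ : Fin M × Fin S => νz))
      = ∫ w, (∫ z, P w z ∂νz) ∂νw := fun m i => by
    rw [← integral_prod _ hi1]
    exact mp_integral (hmp m i) hPmeas
  rw [covariance_eq_sub (hL m i) (hL m' j), hE, hE]
  have hg := g_memLp νw νz P hPmeas hP2
  have hgsq : Integrable (fun w => (∫ z, P w z ∂νz) ^ 2) νw := hg.integrable_sq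
  have hsq : Integrable (fun p : E × F => P p.1 p.2 ^ 2) (νw.prod νz) := hP2.integrable_sq
  rw [variance_eq_sub hg]
  simp only [Pi.mul_apply, Pi.pow_apply]
  split_ifs with h1 h2
  · subst h1 h2
    rw [integral_sub hsq.integral_prod_left hgsq, ← integral_prod _ hsq]
    have := mp_integral (hmp m i) (hPmeas.pow_const 2)
    simp only [Prod.map_fst, Prod.map_snd, Function.eval] at this
    rw [← this]
    simp only [sq]
    ring
  · subst h1
    have hz : MeasurePreserving
      (Prod.map (Function.eval m) (fun f => (f (m, i), f (m, j))) :
        (Fin M → E) × (Fin M × Fin S → F) → E × (F × F))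
      ((Measure.pi fun _ : Fin M => νw).prod (Measure.pi fun _ : Fin M × Fin S => νz))
      (νw.prod (νz.prod νz)) := (measurePreserving_eval (fun _ : Fin M => νw) m).prod
        (mp_eval_pair νz (by simpa using h2))
    have hmeas : Measurable (fun p : E × (F × F) => P p.1 p.2.1 * P p.1 p.2.2) :=
      (hPmeas.comp (g := fun p : E × F => P p.1 p.2) (f := fun p : E × (F × F) => (p.1, p.2.1))
        (by fun_prop)).mul
      (hPmeas.comp (g := fun p : E × F => P p.1 p.2) (f := fun p : E × (F × F) => (p.1, p.2.2))
        (by fun_prop))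
    have := mp_integral hz hmeas
    simp only [Prod.map_fst, Prod.map_snd, Function.eval] at this
    rw [this, same_integral νw νz P hPmeas hP2]
    ring
  · have hz : MeasurePreserving
      (Prod.map (fun f => (f m, f m')) (fun f => (f (m, i), f (m', j))) :
        (Fin M → E) × (Fin M × Fin S → F) → (E × E) × (F × F))
      ((Measure.pi fun _ : Fin M => νw).prod (Measure.pi fun _ : Fin M × Fin S => νz))
      ((νw.prod νw).prod (νz.prod νz)) := (mp_eval_pair νw h1).prod
        (mp_eval_pair νz (by simp [h1]))
    have hmeas : Measurable (fun p : (E × E) × (F × F) => P p.1.1 p.2.1 * P p.1.2 p.2.2) :=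
      (hPmeas.comp (g := fun p : E × F => P p.1 p.2)
        (f := fun p : (E × E) × (F × F) => (p.1.1, p.2.1)) (by fun_prop)).mul
      (hPmeas.comp (g := fun p : E × F => P p.1 p.2)
        (f := fun p : (E × E) × (F × F) => (p.1.2, p.2.2)) (by fun_prop))
    have := mp_integral hz hmeas
    simp only [Prod.map_fst, Prod.map_snd] at this
    rw [this, diff_integral νw νz P hPmeas hP2]
    ring

/-- mean and variance of the path-splitting estimator.
With `w, z` independent random elements of laws `νw, νz`, `P` measurable and square
integrable with respect to `νw ⊗ νz`, and i.i.d. samples `w^1,…,w^M` and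
`(z^{m,i})_{m≤M, i≤S}` (the whole family independent — realised here on the canonical
product space `(Fin M → E) × (Fin M × Fin S → F)` with the product measure), the estimator
`Y_{M,S} = M⁻¹ ∑_m (S⁻¹ ∑_i P(w^m, z^{m,i}))` is unbiased for `E[P(w,z)]` and
`Var[Y_{M,S}] = M⁻¹ Var_w[E_z[P(w,z)|w]] + (MS)⁻¹ E_w[Var_z[P(w,z)|w]]`. -/
theorem splitting_estimator_mean_variance
    {E F : Type*} [MeasurableSpace E] [MeasurableSpace F]
    (νw : Measure E) (νz : Measure F)
    [IsProbabilityMeasure νw] [IsProbabilityMeasure νz]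
    (P : E → F → ℝ) (hPmeas : Measurable fun p : E × F => P p.1 p.2)
    (hP2 : MemLp (fun p : E × F => P p.1 p.2) 2 (νw.prod νz))
    (M S : ℕ) (hM : 1 ≤ M) (hS : 1 ≤ S) :
    (∫ ω : (Fin M → E) × (Fin M × Fin S → F),
        (M : ℝ)⁻¹ * ∑ m : Fin M, (S : ℝ)⁻¹ * ∑ i : Fin S, P (ω.1 m) (ω.2 (m, i))
        ∂((Measure.pi fun _ : Fin M => νw).prod (Measure.pi fun _ : Fin M × Fin S => νz)))
      = (∫ p : E × F, P p.1 p.2 ∂(νw.prod νz)) ∧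
    variance (fun ω : (Fin M → E) × (Fin M × Fin S → F) =>
        (M : ℝ)⁻¹ * ∑ m : Fin M, (S : ℝ)⁻¹ * ∑ i : Fin S, P (ω.1 m) (ω.2 (m, i)))
        ((Measure.pi fun _ : Fin M => νw).prod (Measure.pi fun _ : Fin M × Fin S => νz))
      = (M : ℝ)⁻¹ * variance (fun w => ∫ z, P w z ∂νz) νw
        + ((M : ℝ) * (S : ℝ))⁻¹
            * ∫ w, ((∫ z, P w z ^ 2 ∂νz) - (∫ z, P w z ∂νz) ^ 2) ∂νw := by
  have hM0 : (M : ℝ) ≠ 0 := by positivity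
  have hS0 : (S : ℝ) ≠ 0 := by positivity
  have hmp : ∀ (m : Fin M) (i : Fin S), MeasurePreserving
      (Prod.map (Function.eval m) (Function.eval (m, i)) :
        (Fin M → E) × (Fin M × Fin S → F) → E × F)
      ((Measure.pi fun _ : Fin M => νw).prod (Measure.pi fun _ : Fin M × Fin S => νz))
      (νw.prod νz) := fun m i =>
    (measurePreserving_eval (fun _ : Fin M => νw) m).prod
      (measurePreserving_eval (fun _ : Fin M × Fin S => νz) (m, i))
  have hL : ∀ (m : Fin M) (i : Fin S), MemLp
      (fun ω : (Fin M → E) × (Fin M × Fin S → F) => P (ω.1 m) (ω.2 (m, i))) 2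
      ((Measure.pi fun _ : Fin M => νw).prod (Measure.pi fun _ : Fin M × Fin S => νz)) :=
    fun m i => hP2.comp_measurePreserving (hmp m i)
  have hE : ∀ (m : Fin M) (i : Fin S),
      ∫ ω : (Fin M → E) × (Fin M × Fin S → F), P (ω.1 m) (ω.2 (m, i))
      ∂((Measure.pi fun _ : Fin M => νw).prod (Measure.pi fun _ : Fin M × Fin S => νz))
      = ∫ p : E × F, P p.1 p.2 ∂(νw.prod νz) := fun m i => mp_integral (hmp m i) hPmeas
  have hI := fun m i => (hL m i).integrable (by norm_num)
  constructor
  · rw [integral_const_mul, integral_finsetSum _ fun m _ =>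
      (integrable_finsetSum _ fun i _ => hI m i).const_mul _]
    simp_rw [integral_const_mul]
    have : ∀ m : Fin M, ∫ ω : (Fin M → E) × (Fin M × Fin S → F),
        ∑ i : Fin S, P (ω.1 m) (ω.2 (m, i))
        ∂((Measure.pi fun _ : Fin M => νw).prod (Measure.pi fun _ : Fin M × Fin S => νz))
        = S * ∫ p : E × F, P p.1 p.2 ∂(νw.prod νz) := fun m => by
      rw [integral_finsetSum _ fun i _ => hI m i]
      simp [hE]
    simp_rw [this]
    simp only [Finset.sum_const, Finset.card_univ, Fintype.card_fin, nsmul_eq_mul]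
    field_simp
  · simp_rw [← Finset.mul_sum]
    rw [variance_const_mul, variance_const_mul, ← covariance_self, covariance_fun_sum_fun_sum]
    rotate_left
    · exact fun m => memLp_finsetSum _ fun i _ => hL m i
    · exact fun m => memLp_finsetSum _ fun i _ => hL m i
    · exact (memLp_finsetSum _ fun m _ => memLp_finsetSum _ fun i _ => hL m i).aemeasurable
    have : ∀ m m' : Fin M, covariance
        (fun ω : (Fin M → E) × (Fin M × Fin S → F) => ∑ i : Fin S, P (ω.1 m) (ω.2 (m, i)))
        (fun ω => ∑ i : Fin S, P (ω.1 m') (ω.2 (m', i)))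
        ((Measure.pi fun _ : Fin M => νw).prod (Measure.pi fun _ : Fin M × Fin S => νz))
        = if m = m' then (S : ℝ) ^ 2 * variance (fun w => ∫ z, P w z ∂νz) νw + S *
          ∫ w, ((∫ z, P w z ^ 2 ∂νz) - (∫ z, P w z ∂νz) ^ 2) ∂νw else 0 := fun m m' => by
      rw [covariance_fun_sum_fun_sum (hL m) (hL m')]
      simp_rw [cov_term νw νz P hPmeas hP2]
      split_ifs
      · simp [Finset.sum_add_distrib]
        ring
      · simp
    simp_rw [this]
    simp only [Finset.sum_ite_eq, Finset.mem_univ, if_true, Finset.sum_const, Finset.card_univ,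
      Fintype.card_fin, nsmul_eq_mul]
    field_simp
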